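/- Let n, m ≥ 1 and let r = (r_1, …, r_n) ∈ ℕ^n satisfy r_1 + 2r_2 + ⋯ + n·r_n = n, |r| := r_1 + ⋯ + r_n < n, and m ≤ |r| and m < n. Then the number N of noncrossing set partitions of [n] of type r with exactly m connected components satisfies N · (n − |r| − 1)! · (|r| − m)! · r_1! r_2! ⋯ r_n! = m · (n − m − 1)! · (|r| − 1)!. -/

import Mathlib

/-- A set partition of `[n] = {1, …, n}`, encoded as a `Finpartition` of `Finset.Icc 1 n`. -/
abbrev SetPartitionOn (n : ℕ) := Finpartition (Finset.Icc 1 n)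

/-- `π` has type `r = (r_1, …, r_n)` if for each `i` the number of blocks of size `i` is `r_i`. -/
def HasType {n : ℕ} (π : SetPartitionOn n) (r : Fin n → ℕ) : Prop :=
  ∀ i : Fin n, (π.parts.filter (fun B => B.card = i.1 + 1)).card = r i

/-- `π` is noncrossing: there are no `a < b < c < d` with `a, c` in one block and
`b, d` in a different block. -/
def Noncrossing {n : ℕ} (π : SetPartitionOn n) : Prop :=
  ¬ ∃ a b c d : ℕ, a < b ∧ b < c ∧ c < d ∧
      ∃ B ∈ π.parts, ∃ B' ∈ π.parts, B ≠ B' ∧ a ∈ B ∧ c ∈ B ∧ b ∈ B' ∧ d ∈ B'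

/-- `(i, j)` is an arc of `π`: `i < j` lie in a common block with no element of that
block strictly between them. -/
def IsArc {n : ℕ} (π : SetPartitionOn n) (i j : ℕ) : Prop :=
  i < j ∧ ∃ B ∈ π.parts, i ∈ B ∧ j ∈ B ∧ ∀ k ∈ B, ¬ (i < k ∧ k < j)

/-- `π` is nonnesting: there are no arcs `(a, d)` and `(b, c)` with `a < b < c < d`. -/
def Nonnesting {n : ℕ} (π : SetPartitionOn n) : Prop :=
  ¬ ∃ a b c d : ℕ, a < b ∧ b < c ∧ c < d ∧ IsArc π a d ∧ IsArc π b c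

/-- `i ∈ {1, …, n-1}` is a cut of `π` if no block contains both an element `≤ i` and an
element `> i`. -/
def IsCut {n : ℕ} (π : SetPartitionOn n) (i : ℕ) : Prop :=
  1 ≤ i ∧ i ≤ n - 1 ∧ ∀ B ∈ π.parts, (∀ x ∈ B, x ≤ i) ∨ (∀ x ∈ B, i < x)

/-- `π` is connected if it has no cuts. -/
def Connected {n : ℕ} (π : SetPartitionOn n) : Prop := ∀ i, ¬ IsCut π i

/-- The number of cuts of `π`; `π` has exactly `m` connected components iff this is `m - 1`. -/
noncomputable def cutCount {n : ℕ} (π : SetPartitionOn n) : ℕ := Set.ncard {i : ℕ | IsCut π i}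

/-!
Write the size of every block of a noncrossing partition of `[n]` at its least element and `0`
elsewhere. Reading a letter `x` as a step `x - 1`, the resulting word becomes a Łukasiewicz path
from height `0`. Its height after `i` steps is the number of elements `> i` in blocks that start
at or before `i`, so the path is nonnegative, ends at `0`, and returns to `0` before the end
exactly at the cuts. The path determines the partition: `x` belongs to the block of the last
letter that rises from a height at most that of the path at `x`. This is a bijection onto the
nonnegative paths that end at `0`, and it carries the type to the multiset of letters.

It remains to count words with prescribed letters and prescribed number of returns. With equal
letters distinguished and an arbitrary starting height, the choice of the first letter is a sum
over the multiset. The closed form depends on the multiset only through its cardinality and sum,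
so such a sum can be evaluated and the formula follows by induction on the length.
-/

open Finset
open scoped Nat

lemma eq_of_card_eq_of_count_eq {α : Type*} [DecidableEq α] (a : α) {A B : Multiset α}
    (hcard : A.card = B.card) (h : ∀ x ≠ a, A.count x = B.count x) : A = B := by
  wlog hle : A.count a ≤ B.count a generalizing A B
  · exact (this hcard.symm (fun x hx => (h x hx).symm) (le_of_not_ge hle)).symm
  refine Multiset.eq_of_le_of_card_le (Multiset.le_iff_count.2 fun x => ?_) hcard.ge
  rcases eq_or_ne x a with rfl | hx
  · exact hle
  · exact (h x hx).le

lemma eq_of_forall₂_le_of_sum_le {l l' : List ℕ} (h : List.Forall₂ (· ≤ ·) l l')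
    (hsum : l'.sum ≤ l.sum) : l = l' := by
  induction h with
  | nil => rfl
  | cons hab h ih =>
    have := h.sum_le_sum
    rw [List.sum_cons, List.sum_cons] at hsum
    exact congrArg₂ _ (by lia) (ih (by lia))

section LabelledCount

variable {α : Type*} [DecidableEq α]

/-- The finite set of words whose multiset of letters is `S`. -/
def arrangements (S : Multiset α) : Finset (List α) := S.lists.toFinset

lemma mem_arrangements {S : Multiset α} {l : List α} :
    l ∈ arrangements S ↔ (l : Multiset α) = S := by
  simp [arrangements, Multiset.mem_lists_iff, eq_comm]

/-- The number of arrangements of `S` satisfying `Q`, where equal letters are distinguished: each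
word is counted `∏ (count x)!` times. Counting this way makes the choice of a first letter a plain
sum over `S`. -/
def labelledCount (S : Multiset α) (Q : List α → Prop) [DecidablePred Q] : ℕ :=
  #{l ∈ arrangements S | Q l} * ∏ x ∈ S.toFinset, (S.count x)!

lemma prod_factorial_count_of_subset {S : Multiset α} {t : Finset α} (h : S.toFinset ⊆ t) :
    ∏ x ∈ S.toFinset, (S.count x)! = ∏ x ∈ t, (S.count x)! :=
  prod_subset h fun x _ hx => by
    rw [Multiset.count_eq_zero_of_notMem (by simpa using hx), Nat.factorial_zero]

lemma prod_factorial_count_erase {S : Multiset α} {x : α} (hx : x ∈ S) :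
    ∏ y ∈ S.toFinset, (S.count y)! =
      S.count x * ∏ y ∈ (S.erase x).toFinset, ((S.erase x).count y)! := by
  have hsub : (S.erase x).toFinset ⊆ S.toFinset :=
    Multiset.toFinset_subset.2 (Multiset.erase_subset x S)
  have hxS : x ∈ S.toFinset := by simpa using hx
  rw [prod_factorial_count_of_subset hsub, ← mul_prod_erase _ _ hxS, ← mul_prod_erase _ _ hxS,
    Multiset.count_erase_self, ← mul_assoc, Nat.mul_factorial_pred (Multiset.count_pos.2 hx).ne']
  congr 1
  exact prod_congr rfl fun y hy => by rw [Multiset.count_erase_of_ne (ne_of_mem_erase hy)]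

lemma filter_arrangements_eq_biUnion {S : Multiset α} (hS : S ≠ 0) (Q : List α → Prop)
    [DecidablePred Q] :
    {l ∈ arrangements S | Q l} = S.toFinset.biUnion fun x =>
      {l ∈ arrangements (S.erase x) | Q (x :: l)}.image (List.cons x) := by
  ext l
  simp only [mem_filter, mem_arrangements, mem_biUnion, mem_image, Multiset.mem_toFinset]
  constructor
  · rintro ⟨rfl, hQ⟩
    cases l with
    | nil => simp at hS
    | cons x l => exact ⟨x, by simp, l, ⟨by simp, hQ⟩, rfl⟩
  · rintro ⟨x, hx, l, ⟨hl, hQ⟩, rfl⟩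
    exact ⟨by rw [← Multiset.cons_coe, hl, Multiset.cons_erase hx], hQ⟩

lemma labelledCount_eq_sum_cons {S : Multiset α} (hS : S ≠ 0) (Q : List α → Prop)
    [DecidablePred Q] :
    labelledCount S Q = (S.map fun x => labelledCount (S.erase x) fun l => Q (x :: l)).sum := by
  have hdisj : (S.toFinset : Set α).PairwiseDisjoint fun x =>
      {l ∈ arrangements (S.erase x) | Q (x :: l)}.image (List.cons x) := by
    intro x _ y _ hxy
    simp only [Function.onFun, disjoint_left, mem_image]
    rintro _ ⟨l, -, rfl⟩ ⟨l', -, h⟩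
    exact hxy (List.cons.inj h).1.symm
  rw [labelledCount, filter_arrangements_eq_biUnion hS, card_biUnion hdisj, sum_mul,
    sum_multiset_map_count]
  refine sum_congr rfl fun x hx => ?_
  rw [card_image_of_injective _ List.cons_injective,
    prod_factorial_count_erase (Multiset.mem_toFinset.1 hx), labelledCount, smul_eq_mul]
  ring

lemma labelledCount_congr {S : Multiset α} {Q Q' : List α → Prop} [DecidablePred Q]
    [DecidablePred Q'] (h : ∀ l : List α, (l : Multiset α) = S → (Q l ↔ Q' l)) :
    labelledCount S Q = labelledCount S Q' := by
  rw [labelledCount, labelledCount, filter_congr fun l hl => h l (mem_arrangements.1 hl)]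

lemma labelledCount_eq_zero {S : Multiset α} {Q : List α → Prop} [DecidablePred Q]
    (h : ∀ l : List α, (l : Multiset α) = S → ¬ Q l) : labelledCount S Q = 0 := by
  rw [labelledCount, filter_false_of_mem fun l hl => h l (mem_arrangements.1 hl), card_empty,
    zero_mul]

end LabelledCount

section Excursion

/-- The height after `i` steps of the Łukasiewicz path which starts at height `h` and rises by
`x - 1` for each letter `x` of `l`. -/
def pathHeight (h : ℤ) (l : List ℕ) (i : ℕ) : ℤ := h + (l.take i).sum - i

/-- The Łukasiewicz path of `l` from height `h` never becomes negative and ends at height `0`. -/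
def IsExcursion (h : ℤ) (l : List ℕ) : Prop :=
  (∀ i ≤ l.length, 0 ≤ pathHeight h l i) ∧ pathHeight h l l.length = 0

/-- The number of visits to height `0` of the Łukasiewicz path of `l` from height `h`, the endpoint
not being counted. -/
def numZeros (h : ℤ) (l : List ℕ) : ℕ := #{i ∈ range l.length | pathHeight h l i = 0}

instance (h : ℤ) : DecidablePred (IsExcursion h) := fun l => by
  unfold IsExcursion; infer_instance

variable {h : ℤ} {x : ℕ} {l : List ℕ}

lemma pathHeight_zero (h : ℤ) (l : List ℕ) : pathHeight h l 0 = h := by simp [pathHeight]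

lemma pathHeight_cons_succ (h : ℤ) (x : ℕ) (l : List ℕ) (i : ℕ) :
    pathHeight h (x :: l) (i + 1) = pathHeight (h + x - 1) l i := by
  simp only [pathHeight, List.take_succ_cons, List.sum_cons]
  push_cast
  ring

lemma pathHeight_succ {i : ℕ} (hi : i < l.length) :
    pathHeight h l (i + 1) = pathHeight h l i + l[i] - 1 := by
  rw [pathHeight, pathHeight, List.sum_take_succ l i hi]
  push_cast
  ring

lemma isExcursion_nil : IsExcursion h [] ↔ h = 0 := by
  simp only [IsExcursion, List.length_nil, nonpos_iff_eq_zero, forall_eq, pathHeight_zero]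
  exact ⟨And.right, fun h0 => ⟨h0.ge, h0⟩⟩

lemma isExcursion_cons : IsExcursion h (x :: l) ↔ 0 ≤ h ∧ IsExcursion (h + x - 1) l := by
  simp only [IsExcursion, List.length_cons, pathHeight_cons_succ, ← and_assoc]
  refine and_congr_left fun _ => ⟨fun H => ⟨?_, fun i hi => ?_⟩, fun ⟨h0, H⟩ i hi => ?_⟩
  · simpa [pathHeight_zero] using H 0 (Nat.zero_le _)
  · simpa [pathHeight_cons_succ] using H (i + 1) (by lia)
  · cases i with
    | zero => rwa [pathHeight_zero]
    | succ i => rw [pathHeight_cons_succ]; exact H i (by lia)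

lemma IsExcursion.nonneg (hl : IsExcursion h l) : 0 ≤ h := by
  simpa [pathHeight_zero] using hl.1 0 (Nat.zero_le _)

lemma IsExcursion.sum_eq_length (hl : IsExcursion 0 l) : l.sum = l.length := by
  have := hl.2
  rw [pathHeight, List.take_length] at this
  lia

lemma numZeros_cons (h : ℤ) (x : ℕ) (l : List ℕ) :
    numZeros h (x :: l) = numZeros (h + x - 1) l + if h = 0 then 1 else 0 := by
  simp only [numZeros, card_filter, List.length_cons, sum_range_succ', pathHeight_cons_succ,
    pathHeight_zero]

lemma IsExcursion.numZeros_le (hl : IsExcursion h l) : numZeros h l ≤ l.countP (· ≠ 0) := by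
  induction l generalizing h with
  | nil => simp [numZeros]
  | cons x l ih =>
    have htail := (isExcursion_cons.1 hl).2
    have hle := ih htail
    have h0 := htail.nonneg
    rw [numZeros_cons, List.countP_cons]
    grind

/-- The labelled count of excursions from height `h` with `M` visits to `0` before the endpoint
whose letters are `z` zeros and the members of `U`. -/
def excursionCount (z : ℕ) (U : Multiset ℕ) (h : ℤ) (M : ℕ) : ℕ :=
  labelledCount (Multiset.replicate z 0 + U) fun l => IsExcursion h l ∧ numZeros h l = M

variable {z M : ℕ} {U : Multiset ℕ}

lemma excursionCount_eq_zero_of_card_lt (hM : U.card < M) : excursionCount z U h M = 0 := by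
  refine labelledCount_eq_zero fun l hl hQ => ?_
  have hcount : l.countP (· ≠ 0) ≤ U.card := by
    rw [← Multiset.coe_countP, hl, Multiset.countP_add,
      Multiset.countP_eq_zero.2 (by simp +contextual [Multiset.mem_replicate]), zero_add]
    exact Multiset.countP_le_card _ _
  have := hQ.1.numZeros_le.trans hcount
  lia

lemma excursionCount_zero_zero : excursionCount 0 0 0 0 = 1 := by
  have : {l ∈ arrangements (0 : Multiset ℕ) | IsExcursion 0 l ∧ numZeros 0 l = 0} = {[]} := by
    ext l
    simp +contextual [mem_arrangements, isExcursion_nil, numZeros]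
  simp [excursionCount, labelledCount, this]

lemma labelledCount_replicate_add_eq_sum_cons (hU : 0 ∉ U) (hne : z + U.card ≠ 0)
    (Q : List ℕ → Prop) [DecidablePred Q] :
    labelledCount (Multiset.replicate z 0 + U) Q =
      z * labelledCount (Multiset.replicate (z - 1) 0 + U) (fun l => Q (0 :: l)) +
      (U.map fun x => labelledCount (Multiset.replicate z 0 + U.erase x) fun l => Q (x :: l)).sum
      := by
  have hS : Multiset.replicate z 0 + U ≠ 0 := fun h => hne (by simpa using congrArg Multiset.card h)
  rw [labelledCount_eq_sum_cons hS, Multiset.map_add, Multiset.sum_add]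
  congr 1
  · cases z with
    | zero => simp
    | succ z =>
      rw [Multiset.map_replicate, Multiset.sum_replicate, smul_eq_mul, Nat.add_sub_cancel,
        Multiset.replicate_succ, Multiset.cons_add, Multiset.erase_cons_head]
  · congr 1
    refine Multiset.map_congr rfl fun x hx => ?_
    rw [Multiset.erase_add_right_neg]
    exact fun h => hU (Multiset.eq_of_mem_replicate h ▸ hx)

lemma excursionCount_zero_height_zero (hne : z + U.card ≠ 0) : excursionCount z U 0 0 = 0 := by
  refine labelledCount_eq_zero fun l hl => ?_
  cases l with
  | nil => exact absurd (by simpa using congrArg Multiset.card hl) hne.symm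
  | cons x l => simp [numZeros_cons]

lemma excursionCount_zero_height_succ (hU : 0 ∉ U) (hne : z + U.card ≠ 0) :
    excursionCount z U 0 (M + 1) =
      (U.map fun x : ℕ => excursionCount z (U.erase x) ((x : ℤ) - 1) M).sum := by
  rw [excursionCount, labelledCount_replicate_add_eq_sum_cons hU hne,
    labelledCount_eq_zero fun l _ hl => ?_, mul_zero, zero_add]
  · congr 1
    refine Multiset.map_congr rfl fun x _ => labelledCount_congr fun l _ => ?_
    simp [isExcursion_cons, numZeros_cons]
  · have hneg := (isExcursion_cons.1 hl.1).2.nonneg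
    norm_num at hneg

lemma excursionCount_of_pos (hU : 0 ∉ U) (hne : z + U.card ≠ 0) (hh : 0 < h) :
    excursionCount z U h M = z * excursionCount (z - 1) U (h - 1) M +
      (U.map fun x : ℕ => excursionCount z (U.erase x) (h + x - 1) M).sum := by
  have hcons (x : ℕ) (l : List ℕ) : (IsExcursion h (x :: l) ∧ numZeros h (x :: l) = M) ↔
      IsExcursion (h + x - 1) l ∧ numZeros (h + x - 1) l = M := by
    simp [isExcursion_cons, numZeros_cons, hh.le, hh.ne']
  rw [excursionCount, labelledCount_replicate_add_eq_sum_cons hU hne]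
  congr 1
  · congr 1
    exact labelledCount_congr fun l _ => by simpa using hcons 0 l
  · congr 1
    exact Multiset.map_congr rfl fun x _ => labelledCount_congr fun l _ => hcons x l

/-- The closed form for the labelled count `N` of excursions with `z` letters `0`, `s` other letters
of sum `t`, and `s - d` visits to `0`. It reads `N = s! (d + z)! / d! - (s - 1)! (d + z - 1)! t /
(d - 1)!`, with the last term absent for `d = 0`; denominators and signs are cleared. -/
def ExcursionFormula (N z s d t : ℕ) : Prop :=
  N * d ! + d * (s - 1)! * (d + z - 1)! * t = s ! * (d + z)!

lemma ExcursionFormula.sum_erase {f : ℕ → ℕ} {s d : ℕ} (hcard : U.card = s + 1) (hds : d ≤ s)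
    (hf : ∀ x ∈ U, ExcursionFormula (f x) z s d (U.erase x).sum) :
    ExcursionFormula (U.map f).sum z (s + 1) d U.sum := by
  have hsum_erase : (U.map fun x => (U.erase x).sum).sum + U.sum = (s + 1) * U.sum := by
    have hadd := Multiset.sum_map_add (m := U) (f := fun x => (U.erase x).sum) (g := id)
    rw [Multiset.map_id] at hadd
    rw [← hadd, Multiset.map_congr rfl fun x hx => by
      rw [id, add_comm, Multiset.sum_erase hx]]
    simp [hcard, add_one_mul, add_comm]
  have hsum : (U.map f).sum * d ! + d * (s - 1)! * (d + z - 1)! *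
      (U.map fun x => (U.erase x).sum).sum = (s + 1) * (s ! * (d + z)!) := by
    rw [← Multiset.sum_map_mul_right, ← Multiset.sum_map_mul_left, ← Multiset.sum_map_add,
      Multiset.map_congr rfl hf]
    simp [hcard, add_one_mul, add_comm]
  have hd : d * s ! = d * (s - 1)! * s := by
    rcases Nat.eq_zero_or_pos s with rfl | hs
    · simp [Nat.le_zero.1 hds]
    · rw [← Nat.mul_factorial_pred hs.ne']; ring
  rw [ExcursionFormula, Nat.add_sub_cancel, Nat.factorial_succ, hd]
  linear_combination hsum - d * (s - 1)! * (d + z - 1)! * hsum_erase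

lemma ExcursionFormula.add_zero_letter {A B s e t : ℕ} (hA : ExcursionFormula A z s (e + 1) t)
    (hB : ExcursionFormula B (z + 1) s e t) :
    ExcursionFormula ((z + 1) * A + B) (z + 1) s (e + 1) t := by
  have hA' : e + 1 + z = e + z + 1 := by ring
  have hB' : e + 1 + (z + 1) = e + z + 1 + 1 := by ring
  simp only [ExcursionFormula, hA', hB', ← add_assoc, Nat.add_sub_cancel,
    Nat.factorial_succ (e + z + 1)] at hA hB ⊢
  rw [Nat.factorial_succ e] at hA ⊢
  linear_combination (z + 1) * hA + (e + 1) * hB +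
    (e + 1) * (s - 1)! * t * Nat.factorial_succ (e + z)

lemma ExcursionFormula.add_zero_letter_zero {A s t : ℕ} (hA : ExcursionFormula A z s 0 t) :
    ExcursionFormula ((z + 1) * A) (z + 1) s 0 t := by
  simp only [ExcursionFormula, Nat.factorial_zero, zero_mul, add_zero, zero_add] at hA ⊢
  rw [Nat.factorial_succ]
  linear_combination (z + 1) * hA

lemma excursionFormula_zero {s : ℕ} (hs : s ≠ 0) : ExcursionFormula 0 z s s (z + s) := by
  rw [ExcursionFormula, Nat.mul_factorial_pred hs, zero_mul, zero_add, mul_assoc, add_comm z,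
    mul_comm _ (s + z), Nat.mul_factorial_pred (by lia)]

lemma excursionCount_formula_height_zero {d : ℕ} (hU : 0 ∉ U) (hne : U.card ≠ 0)
    (hsum : U.sum = z + U.card) (hMd : M + d = U.card)
    (hletter : ∀ {M}, M + d + 1 = U.card → ExcursionFormula
      (U.map fun x : ℕ => excursionCount z (U.erase x) ((x : ℤ) - 1) M).sum z U.card d U.sum) :
    ExcursionFormula (excursionCount z U 0 M) z U.card d U.sum := by
  have hne' : z + U.card ≠ 0 := by lia
  cases M with
  | zero =>
    obtain rfl : d = U.card := by lia
    rw [excursionCount_zero_height_zero hne', hsum]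
    exact excursionFormula_zero hne
  | succ M =>
    rw [excursionCount_zero_height_succ hU hne']
    exact hletter (by lia)

lemma excursionCount_formula_of_pos {d : ℕ} (hU : 0 ∉ U) (hh : 0 < h) (hMd : M + d = U.card)
    (hzero : ExcursionFormula (excursionCount z U (h - 1) M) z U.card d U.sum)
    (hletter : ∀ {e}, M + e + 1 = U.card → ExcursionFormula
      (U.map fun x : ℕ => excursionCount (z + 1) (U.erase x) (h + x - 1) M).sum
      (z + 1) U.card e U.sum) :
    ExcursionFormula (excursionCount (z + 1) U h M) (z + 1) U.card d U.sum := by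
  rw [excursionCount_of_pos hU (by lia) hh, Nat.add_sub_cancel]
  cases d with
  | zero =>
    have hvanish : ∀ x ∈ U, excursionCount (z + 1) (U.erase x) (h + x - 1) M = 0 := fun x hx =>
      excursionCount_eq_zero_of_card_lt <| by
        have := Multiset.card_erase_add_one hx
        lia
    rw [Multiset.map_congr rfl hvanish, Multiset.sum_map_zero, add_zero]
    exact hzero.add_zero_letter_zero
  | succ e => exact hzero.add_zero_letter (hletter hMd)

theorem excursionCount_formula {d : ℕ} (hU : 0 ∉ U) (hh : 0 ≤ h)
    (hsum : h + U.sum = z + U.card) (hMd : M + d = U.card) :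
    ExcursionFormula (excursionCount z U h M) z U.card d U.sum := by
  induction hn : z + U.card using Nat.strong_induction_on generalizing z U h M d with
  | _ n ih =>
  have hpos {x : ℕ} (hx : x ∈ U) : 1 ≤ x := Nat.one_le_iff_ne_zero.2 fun h0 => hU (h0 ▸ hx)
  have ih_sum {M e : ℕ} (hMe : M + e + 1 = U.card) : ExcursionFormula
      (U.map fun x : ℕ => excursionCount z (U.erase x) (h + x - 1) M).sum z U.card e U.sum := by
    rw [← hMe]
    refine .sum_erase hMe.symm (by lia) fun x hx => ?_
    have hcard := Multiset.card_erase_add_one hx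
    have herase := Multiset.sum_erase hx
    have h1 := hpos hx
    rw [show M + e = (U.erase x).card by lia]
    exact ih (z + (U.erase x).card) (by lia) (fun h0 => hU (Multiset.mem_of_mem_erase h0)) (by lia)
      (by lia) (by lia) rfl
  have hle : U.card ≤ U.sum := by
    simpa using Multiset.card_nsmul_le_sum fun x hx => hpos hx
  rcases hh.eq_or_lt with rfl | hh
  · rcases eq_or_ne U 0 with rfl | hU0
    · obtain rfl : z = 0 := by simpa using hsum.symm
      obtain ⟨rfl, rfl⟩ : M = 0 ∧ d = 0 := by simpa using hMd
      simp [ExcursionFormula, excursionCount_zero_zero]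
    · exact excursionCount_formula_height_zero hU (by simpa using hU0) (by lia) hMd
        fun hMe => by simpa using ih_sum hMe
  · obtain ⟨z, rfl⟩ := Nat.exists_eq_add_one_of_ne_zero (show z ≠ 0 by lia)
    exact excursionCount_formula_of_pos hU hh hMd
      (ih (z + U.card) (by lia) hU (by lia) (by lia) hMd rfl) ih_sum

lemma ExcursionFormula.mul_factorial_pred {N z s d m t : ℕ} (h : ExcursionFormula (N * z !) z s d t)
    (hz : z ≠ 0) (hs : s ≠ 0) (hmd : m + d = s) (hzs : z + s = t) :
    N * (z - 1)! * d ! = m * (t - m - 1)! * (s - 1)! := by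
  obtain ⟨z, rfl⟩ := Nat.exists_eq_add_one_of_ne_zero hz
  obtain ⟨s, rfl⟩ := Nat.exists_eq_add_one_of_ne_zero hs
  have hsub : t - m - 1 = d + z := by lia
  rw [ExcursionFormula, ← add_assoc, Nat.add_sub_cancel, Nat.add_sub_cancel, ← hzs,
    Nat.factorial_succ z, Nat.factorial_succ s, Nat.factorial_succ (d + z)] at h
  rw [hsub, Nat.add_sub_cancel, Nat.add_sub_cancel]
  refine Nat.eq_of_mul_eq_mul_left (Nat.add_one_pos z) ?_
  linear_combination h - (z + 1) * (d + z)! * s ! * hmd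

end Excursion

section Blocks

variable {n : ℕ} {π : SetPartitionOn n} {x y : ℕ}

/-- The least element of the block of `π` containing `x`; it is `0` if `x ∉ [n]`. -/
noncomputable def blockMin (π : SetPartitionOn n) (x : ℕ) : ℕ := sInf (π.part x : Set ℕ)

lemma blockMin_mem_part (hx : x ∈ Icc 1 n) : blockMin π x ∈ π.part x :=
  Nat.sInf_mem (coe_nonempty.2 (π.part_nonempty.2 hx))

lemma blockMin_le_of_mem_part (hy : y ∈ π.part x) : blockMin π x ≤ y := Nat.sInf_le hy

lemma blockMin_le (hx : x ∈ Icc 1 n) : blockMin π x ≤ x :=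
  blockMin_le_of_mem_part (π.mem_part hx)

lemma blockMin_mem_Icc (hx : x ∈ Icc 1 n) : blockMin π x ∈ Icc 1 n :=
  π.part_subset x (blockMin_mem_part hx)

lemma part_blockMin (hx : x ∈ Icc 1 n) : π.part (blockMin π x) = π.part x :=
  (π.mem_part_iff_part_eq_part (blockMin_mem_Icc hx) hx).1 (blockMin_mem_part hx)

lemma blockMin_blockMin (hx : x ∈ Icc 1 n) : blockMin π (blockMin π x) = blockMin π x := by
  rw [blockMin, part_blockMin hx, blockMin]

lemma part_eq_filter_blockMin (hx : x ∈ Icc 1 n) :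
    π.part x = {y ∈ Icc 1 n | blockMin π y = blockMin π x} := by
  ext y
  rw [mem_filter]
  refine ⟨fun hy => ?_, fun ⟨hy, hmin⟩ => ?_⟩
  · have hy' := π.part_subset x hy
    refine ⟨hy', ?_⟩
    rw [blockMin, blockMin, (π.mem_part_iff_part_eq_part hy' hx).1 hy]
  · rw [← part_blockMin hx, ← hmin, part_blockMin hy]
    exact π.mem_part hy

lemma mem_parts_iff_exists_part_eq {B : Finset ℕ} : B ∈ π.parts ↔ ∃ x ∈ Icc 1 n, π.part x = B :=
  ⟨fun hB => π.part_surjOn hB, fun ⟨_, hx, hB⟩ => hB ▸ π.part_mem.2 hx⟩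

lemma eq_of_blockMin_eq {π' : SetPartitionOn n}
    (h : ∀ x ∈ Icc 1 n, blockMin π x = blockMin π' x) : π = π' := by
  have hpart : ∀ x ∈ Icc 1 n, π.part x = π'.part x := fun x hx => by
    rw [part_eq_filter_blockMin hx, part_eq_filter_blockMin hx, h x hx]
    exact filter_congr fun y hy => by rw [h y hy]
  ext B
  rw [mem_parts_iff_exists_part_eq, mem_parts_iff_exists_part_eq]
  exact exists_congr fun x => and_congr_right fun hx => by rw [hpart x hx]

lemma noncrossing_iff_blockMin : Noncrossing π ↔ ∀ a b c d, 1 ≤ a → a < b → b < c → c < d → d ≤ n →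
    blockMin π a = blockMin π c → blockMin π b = blockMin π d → blockMin π a = blockMin π b := by
  constructor
  · intro h a b c d ha hab hbc hcd hdn hac hbd
    have haI : a ∈ Icc 1 n := by rw [mem_Icc]; lia
    have hbI : b ∈ Icc 1 n := by rw [mem_Icc]; lia
    have hc : c ∈ π.part a := by rw [part_eq_filter_blockMin haI, mem_filter, mem_Icc]; lia
    have hd : d ∈ π.part b := by rw [part_eq_filter_blockMin hbI, mem_filter, mem_Icc]; lia
    by_contra hne
    refine h ⟨a, b, c, d, hab, hbc, hcd, π.part a, π.part_mem.2 haI, π.part b, π.part_mem.2 hbI,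
      fun heq => hne ?_, π.mem_part haI, hc, π.mem_part hbI, hd⟩
    rw [blockMin, heq, blockMin]
  · rintro h ⟨a, b, c, d, hab, hbc, hcd, B, hB, B', hB', hne, ha, hc, hb, hd⟩
    have hblock {B : Finset ℕ} {x y : ℕ} (hB : B ∈ π.parts) (hx : x ∈ B) (hy : y ∈ B) :
        blockMin π x = blockMin π y := by
      rw [blockMin, blockMin, π.part_eq_of_mem hB hx, π.part_eq_of_mem hB hy]
    have haI := π.le hB ha
    have hdI := π.le hB' hd
    have hab' := h a b c d (mem_Icc.1 haI).1 hab hbc hcd (mem_Icc.1 hdI).2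
      (hblock hB ha hc) (hblock hB' hb hd)
    refine hne ?_
    rw [← π.part_eq_of_mem hB ha, ← π.part_eq_of_mem hB' hb, ← part_blockMin haI, hab',
      part_blockMin (π.le hB' hb)]

lemma isCut_iff_blockMin {i : ℕ} :
    IsCut π i ↔ 1 ≤ i ∧ i ≤ n - 1 ∧ ∀ x ∈ Icc 1 n, blockMin π x ≤ i → x ≤ i := by
  refine and_congr_right fun _ => and_congr_right fun _ => ⟨fun h x hx hmin => ?_, fun h B hB => ?_⟩
  · rcases h _ (π.part_mem.2 hx) with hle | hlt
    · exact hle x (π.mem_part hx)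
    · exact absurd (hlt _ (blockMin_mem_part hx)) hmin.not_gt
  · obtain ⟨x, hx, rfl⟩ := mem_parts_iff_exists_part_eq.1 hB
    rcases le_or_gt (blockMin π x) i with hle | hlt
    · refine .inl fun y hy => ?_
      rw [part_eq_filter_blockMin hx, mem_filter] at hy
      exact h y hy.1 (hy.2.trans_le hle)
    · exact .inr fun y hy => hlt.trans_le (blockMin_le_of_mem_part hy)

end Blocks

section SizeWord

variable {n : ℕ} {π : SetPartitionOn n} {i j x : ℕ}

/-- The size of the block of `π` with least element `j`; it is `0` if there is no such block. -/
noncomputable def sizeAt (π : SetPartitionOn n) (j : ℕ) : ℕ := #{y ∈ Icc 1 n | blockMin π y = j}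

/-- The elements `y > i` whose block starts at or before `i`. -/
noncomputable def straddlers (π : SetPartitionOn n) (i : ℕ) : Finset ℕ :=
  {y ∈ Icc 1 n | i < y ∧ blockMin π y ≤ i}

/-- The word of the block sizes of `π`, each written at the least element of its block, with `0` at
all other positions. -/
noncomputable def sizeWord (π : SetPartitionOn n) : List ℕ := (List.range' 1 n).map (sizeAt π)

lemma mem_straddlers {y : ℕ} : y ∈ straddlers π i ↔ y ∈ Icc 1 n ∧ i < y ∧ blockMin π y ≤ i :=
  mem_filter

lemma sizeAt_blockMin (hx : x ∈ Icc 1 n) : sizeAt π (blockMin π x) = #(π.part x) := by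
  rw [part_eq_filter_blockMin hx, sizeAt]

lemma blockMin_eq_self_of_sizeAt_ne_zero (hj : sizeAt π j ≠ 0) : blockMin π j = j := by
  obtain ⟨y, hy⟩ := card_ne_zero.1 hj
  rw [← (mem_filter.1 hy).2, blockMin_blockMin (mem_filter.1 hy).1]

lemma card_filter_parts_card_eq (k : ℕ) :
    #{B ∈ π.parts | #B = k + 1} = #{j ∈ Icc 1 n | sizeAt π j = k + 1} := by
  symm
  have hself {j : ℕ} (hj : sizeAt π j = k + 1) : blockMin π j = j :=
    blockMin_eq_self_of_sizeAt_ne_zero (by lia)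
  refine card_nbij π.part (fun j hj => ?_) (fun j hj j' hj' heq => ?_) fun B hB => ?_
  · obtain ⟨hjI, hj⟩ := mem_filter.1 hj
    rw [mem_coe, mem_filter, ← sizeAt_blockMin hjI, hself hj]
    exact ⟨π.part_mem.2 hjI, hj⟩
  · rw [← hself (mem_filter.1 hj).2, ← hself (mem_filter.1 hj').2, blockMin, heq, blockMin]
  · obtain ⟨hB, hcard⟩ := mem_filter.1 hB
    obtain ⟨x, hx, rfl⟩ := mem_parts_iff_exists_part_eq.1 hB
    refine ⟨blockMin π x, mem_filter.2 ⟨blockMin_mem_Icc hx, ?_⟩, part_blockMin hx⟩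
    rw [sizeAt_blockMin hx, hcard]

lemma sum_sizeAt (hi : i ≤ n) : ∑ j ∈ Icc 1 i, sizeAt π j = i + #(straddlers π i) := by
  have hfiber : ∀ j ∈ Icc 1 i, sizeAt π j =
      #{y ∈ {y ∈ Icc 1 n | blockMin π y ≤ i} | blockMin π y = j} := fun j hj => by
    rw [sizeAt, filter_filter]
    congr 1
    exact filter_congr fun y _ => by grind
  have hunion : {y ∈ Icc 1 n | blockMin π y ≤ i} = Icc 1 i ∪ straddlers π i := by
    ext y
    have := blockMin_le (π := π) (x := y)
    simp only [straddlers, mem_filter, mem_union, mem_Icc] at this ⊢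
    grind
  have hdisj : Disjoint (Icc 1 i) (straddlers π i) := by
    rw [disjoint_left]
    exact fun y hy hy' => (mem_straddlers.1 hy').2.1.not_ge (mem_Icc.1 hy).2
  rw [sum_congr rfl hfiber, ← card_eq_sum_card_fiberwise, hunion, card_union_of_disjoint hdisj,
    Nat.card_Icc, Nat.add_sub_cancel]
  intro y hy
  have := mem_Icc.1 (blockMin_mem_Icc (π := π) (mem_filter.1 hy).1)
  grind

lemma length_sizeWord (π : SetPartitionOn n) : (sizeWord π).length = n := by simp [sizeWord]

lemma coe_sizeWord (π : SetPartitionOn n) :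
    (sizeWord π : Multiset ℕ) = (Icc 1 n).val.map (sizeAt π) := rfl

lemma pathHeight_sizeWord (hi : i ≤ n) : pathHeight 0 (sizeWord π) i = #(straddlers π i) := by
  have hsum : ((sizeWord π).take i).sum = ∑ j ∈ Icc 1 i, sizeAt π j := by
    rw [sizeWord, ← List.map_take, List.take_range'_of_length_ge hi]
    rfl
  rw [pathHeight, hsum, sum_sizeAt hi]
  push_cast
  ring

lemma straddlers_self (π : SetPartitionOn n) : straddlers π n = ∅ := by
  simp +contextual [straddlers, filter_eq_empty_iff]

lemma isExcursion_sizeWord (π : SetPartitionOn n) : IsExcursion 0 (sizeWord π) := by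
  rw [IsExcursion, length_sizeWord, pathHeight_sizeWord le_rfl, straddlers_self]
  exact ⟨fun i hi => by simp [pathHeight_sizeWord hi], by simp⟩

lemma isCut_iff_pathHeight_eq_zero (hi : i + 1 < n) :
    IsCut π (i + 1) ↔ pathHeight 0 (sizeWord π) (i + 1) = 0 := by
  rw [isCut_iff_blockMin, pathHeight_sizeWord hi.le, Nat.cast_eq_zero, card_eq_zero, straddlers,
    filter_eq_empty_iff]
  grind

lemma numZeros_sizeWord (hn : n ≠ 0) (π : SetPartitionOn n) :
    numZeros 0 (sizeWord π) = cutCount π + 1 := by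
  obtain ⟨n, rfl⟩ := Nat.exists_eq_add_one_of_ne_zero hn
  have hcuts : {i | IsCut π i} =
      ({i ∈ range n | pathHeight 0 (sizeWord π) (i + 1) = 0}.image (· + 1) : Finset ℕ) := by
    ext i
    cases i with
    | zero => simp [IsCut]
    | succ i =>
      have hlt : IsCut π (i + 1) → i < n := fun h => h.2.1
      simp only [Set.mem_ofPred_eq, coe_image, coe_filter, mem_range, Set.mem_image,
        Nat.add_right_cancel_iff, exists_eq_right]
      exact ⟨fun h => ⟨hlt h, (isCut_iff_pathHeight_eq_zero (by have := hlt h; lia)).1 h⟩,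
        fun h => (isCut_iff_pathHeight_eq_zero (by lia)).2 h.2⟩
  rw [cutCount, hcuts, Set.ncard_coe_finset, card_image_of_injective _ (add_left_injective 1),
    numZeros, length_sizeWord, card_filter, card_filter, sum_range_succ',
    pathHeight_zero, if_pos rfl]

end SizeWord

section Opener

variable {H : ℕ → ℤ} {i j x : ℕ}

/-- `j` opens `x` along the path `H`: it is the last time up to `x` at which the path arrives from a
height at most `H x`. If at every time `j` one pushes `H j - H (j - 1) + 1` copies of `j` onto a
stack and then pops one element, the element popped at time `x` is the opener of `x`. -/
def IsOpener (H : ℕ → ℤ) (x j : ℕ) : Prop :=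
  1 ≤ j ∧ j ≤ x ∧ H (j - 1) ≤ H x ∧ ∀ i, j ≤ i → i < x → H x < H i

lemma IsOpener.le_of_isOpener (hj : IsOpener H x j) (hi : IsOpener H x i) : i ≤ j := by
  obtain ⟨hj1, -, -, habove⟩ := hj
  obtain ⟨-, hix, hi', -⟩ := hi
  by_contra hlt
  exact (habove (i - 1) (by lia) (by lia)).not_ge hi'

lemma IsOpener.unique (hj : IsOpener H x j) (hi : IsOpener H x i) : i = j :=
  (hj.le_of_isOpener hi).antisymm (hi.le_of_isOpener hj)

lemma IsOpener.height_le (hj : IsOpener H x j) : H x ≤ H j := by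
  obtain ⟨-, hjx, -, habove⟩ := hj
  rcases hjx.eq_or_lt with rfl | hlt
  · rfl
  · exact (habove j le_rfl hlt).le

lemma IsOpener.self (hj : IsOpener H x j) : IsOpener H j j :=
  ⟨hj.1, le_rfl, hj.2.2.1.trans hj.height_le, by lia⟩

lemma IsOpener.height_lt {y : ℕ} (hx : IsOpener H x j) (hy : IsOpener H y j) (hxy : x < y) :
    H y < H x :=
  hy.2.2.2 x hx.2.1 hxy

lemma IsOpener.eq_of_crossing {a b c d : ℕ} (hab : a < b) (hbc : b < c) (hcd : c < d)
    (ha : IsOpener H a i) (hc : IsOpener H c i) (hb : IsOpener H b j) (hd : IsOpener H d j) :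
    i = j := by
  obtain ⟨hi1, hia, -, -⟩ := ha
  obtain ⟨-, -, hic, habove_c⟩ := hc
  obtain ⟨hj1, hjb, -, habove_b⟩ := hb
  obtain ⟨-, -, hjd, habove_d⟩ := hd
  rcases lt_trichotomy i j with hij | hij | hji
  · have h1 := habove_c (j - 1) (by lia) (by lia)
    have h2 := habove_d c (by lia) hcd
    lia
  · exact hij
  · have h1 := habove_b (i - 1) (by lia) (by lia)
    have h2 := habove_c b (by lia) hbc
    lia

/-- The `j` with `IsOpener H x j`, provided `1 ≤ x` and `H 0 ≤ H x`. -/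
def opener (H : ℕ → ℤ) (x : ℕ) : ℕ := Nat.findGreatest (fun j => 1 ≤ j ∧ H (j - 1) ≤ H x) x

lemma isOpener_opener (hx : 1 ≤ x) (h0 : H 0 ≤ H x) : IsOpener H x (opener H x) := by
  have hspec := Nat.findGreatest_spec (P := fun j => 1 ≤ j ∧ H (j - 1) ≤ H x) hx ⟨le_rfl, h0⟩
  refine ⟨hspec.1, Nat.findGreatest_le x, hspec.2, fun i hi hix => ?_⟩
  by_contra hle
  exact Nat.findGreatest_is_greatest (k := i + 1) (Nat.lt_succ_of_le hi) hix
    ⟨by lia, by simpa using hle⟩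

lemma IsOpener.opener_eq (h0 : H 0 ≤ H x) (hj : IsOpener H x j) : opener H x = j :=
  hj.unique (isOpener_opener (hj.1.trans hj.2.1) h0)

end Opener

section Injectivity

variable {n x : ℕ} {π : SetPartitionOn n}

lemma straddlers_pred_blockMin_subset (hπ : Noncrossing π) (hx : x ∈ Icc 1 n) :
    straddlers π (blockMin π x - 1) ⊆ straddlers π x := by
  intro y hy
  obtain ⟨hyI, hlt, hle⟩ := mem_straddlers.1 hy
  have hx1 := (mem_Icc.1 (blockMin_mem_Icc hx (π := π))).1
  have hy1 := (mem_Icc.1 (blockMin_mem_Icc hyI (π := π))).1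
  have hmin := blockMin_le hx (π := π)
  refine mem_straddlers.2 ⟨hyI, ?_, by lia⟩
  by_contra! hyx
  have hyx' : y ≠ x := by rintro rfl; lia
  have hxy : blockMin π x ≠ y := by rintro rfl; have := blockMin_blockMin hx (π := π); lia
  have := noncrossing_iff_blockMin.1 hπ (blockMin π y) (blockMin π x) y x hy1 (by lia) (by lia)
    (by lia) (mem_Icc.1 hx).2 (blockMin_blockMin hyI) (blockMin_blockMin hx)
  rw [blockMin_blockMin hyI, blockMin_blockMin hx] at this
  lia

lemma straddlers_ssubset (hπ : Noncrossing π) (hx : x ∈ Icc 1 n) {i : ℕ} (hi : blockMin π x ≤ i)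
    (hix : i < x) : straddlers π x ⊂ straddlers π i := by
  refine (ssubset_iff_of_subset fun y hy => ?_).2
    ⟨x, mem_straddlers.2 ⟨hx, hix, hi⟩, fun h => (mem_straddlers.1 h).2.1.false⟩
  obtain ⟨hyI, hlt, hle⟩ := mem_straddlers.1 hy
  have hx1 := (mem_Icc.1 (blockMin_mem_Icc hx (π := π))).1
  refine mem_straddlers.2 ⟨hyI, by lia, ?_⟩
  by_contra! hiy
  have hyx : blockMin π y ≠ x := fun h => by
    have := blockMin_blockMin hyI (π := π)
    rw [h] at this
    lia
  have := noncrossing_iff_blockMin.1 hπ (blockMin π x) (blockMin π y) x y hx1 (by lia) (by lia)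
    hlt (mem_Icc.1 hyI).2 (blockMin_blockMin hx) (blockMin_blockMin hyI)
  rw [blockMin_blockMin hyI, blockMin_blockMin hx] at this
  lia

lemma isOpener_blockMin (hπ : Noncrossing π) (hx : x ∈ Icc 1 n) :
    IsOpener (pathHeight 0 (sizeWord π)) x (blockMin π x) := by
  have hle := blockMin_le hx (π := π)
  have hxn := (mem_Icc.1 hx).2
  refine ⟨(mem_Icc.1 (blockMin_mem_Icc hx)).1, hle, ?_, fun i hi hix => ?_⟩
  · rw [pathHeight_sizeWord (by lia), pathHeight_sizeWord hxn, Nat.cast_le]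
    exact card_le_card (straddlers_pred_blockMin_subset hπ hx)
  · rw [pathHeight_sizeWord hxn, pathHeight_sizeWord (by lia), Nat.cast_lt]
    exact card_lt_card (straddlers_ssubset hπ hx hi hix)

lemma injOn_sizeWord (n : ℕ) : Set.InjOn sizeWord {π : SetPartitionOn n | Noncrossing π} := by
  intro π hπ π' hπ' hword
  refine eq_of_blockMin_eq fun x hx => (isOpener_blockMin hπ' hx).unique ?_
  rw [← hword]
  exact isOpener_blockMin hπ hx

end Injectivity

section Surjectivity

variable {n : ℕ} {H : ℕ → ℤ} {x : ℕ} {l : List ℕ}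

open scoped Classical in
/-- The partition of `[n]` whose blocks are the sets of elements with a common opener. -/
noncomputable def openerPartition (H : ℕ → ℤ) (n : ℕ) : SetPartitionOn n :=
  .ofSetSetoid (Setoid.ker (opener H)) (Icc 1 n)

lemma blockMin_openerPartition (h0 : ∀ x ≤ n, H 0 ≤ H x) (hx : x ∈ Icc 1 n) :
    blockMin (openerPartition H n) x = opener H x := by
  have hopener {y : ℕ} (hy : y ∈ Icc 1 n) : IsOpener H y (opener H y) :=
    isOpener_opener (mem_Icc.1 hy).1 (h0 y (mem_Icc.1 hy).2)
  have hmem {y : ℕ} : y ∈ (openerPartition H n).part x ↔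
      x ∈ Icc 1 n ∧ y ∈ Icc 1 n ∧ opener H x = opener H y := by
    simp [openerPartition, Finpartition.mem_part_ofSetSetoid_iff_rel, Setoid.ker_def]
  apply le_antisymm
  · have hself := (hopener hx).self
    have hle := (hopener hx).2.1
    refine blockMin_le_of_mem_part (hmem.2 ⟨hx, ?_, (hself.opener_eq (h0 _ ?_)).symm⟩)
    · exact mem_Icc.2 ⟨hself.1, hle.trans (mem_Icc.1 hx).2⟩
    · exact hle.trans (mem_Icc.1 hx).2
  · obtain ⟨-, hmin, heq⟩ := hmem.1 (blockMin_mem_part hx)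
    rw [heq]
    exact (hopener hmin).2.1

lemma noncrossing_openerPartition (h0 : ∀ x ≤ n, H 0 ≤ H x) :
    Noncrossing (openerPartition H n) := by
  rw [noncrossing_iff_blockMin]
  intro a b c d ha hab hbc hcd hd hac hbd
  have hopener {y : ℕ} (hy1 : 1 ≤ y) (hy : y ≤ n) :
      IsOpener H y (blockMin (openerPartition H n) y) := by
    rw [blockMin_openerPartition h0 (mem_Icc.2 ⟨hy1, hy⟩)]
    exact isOpener_opener hy1 (h0 y hy)
  refine IsOpener.eq_of_crossing hab hbc hcd (hopener ha (by lia)) ?_ (hopener (by lia) (by lia)) ?_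
  · exact hac ▸ hopener (by lia) (by lia)
  · exact hbd ▸ hopener (by lia) hd

lemma sizeAt_openerPartition_le (h0 : ∀ x ≤ n, H 0 ≤ H x) (i : ℕ) :
    sizeAt (openerPartition H n) (i + 1) ≤ (H (i + 1) + 1 - H i).toNat := by
  have hopener {y : ℕ} (hy : y ∈ filter (blockMin (openerPartition H n) · = i + 1) (Icc 1 n)) :
      IsOpener H y (i + 1) := by
    obtain ⟨hyI, hy⟩ := mem_filter.1 hy
    rw [← hy, blockMin_openerPartition h0 hyI]
    exact isOpener_opener (mem_Icc.1 hyI).1 (h0 y (mem_Icc.1 hyI).2)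
  rw [sizeAt, ← Int.card_Icc]
  refine card_le_card_of_injOn H (fun y hy => ?_) fun y hy z hz heq => ?_
  · exact mem_coe.2 (mem_Icc.2 ⟨(hopener hy).2.2.1, (hopener hy).height_le⟩)
  · rcases lt_trichotomy y z with hlt | rfl | hlt
    · exact absurd heq ((hopener hy).height_lt (hopener hz) hlt).ne'
    · rfl
    · exact absurd heq ((hopener hz).height_lt (hopener hy) hlt).ne

lemma sizeWord_openerPartition (hl : IsExcursion 0 l) :
    sizeWord (openerPartition (pathHeight 0 l) l.length) = l := by
  have h0 : ∀ x ≤ l.length, pathHeight 0 l 0 ≤ pathHeight 0 l x := by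
    simpa [pathHeight_zero] using hl.1
  have hlen := length_sizeWord (openerPartition (pathHeight 0 l) l.length)
  refine eq_of_forall₂_le_of_sum_le (List.forall₂_iff_get.2 ⟨hlen, fun i hi hil => ?_⟩) ?_
  · have hle := sizeAt_openerPartition_le h0 i
    rw [pathHeight_succ hil] at hle
    simp only [sizeWord, List.get_eq_getElem, List.getElem_map, List.getElem_range', one_mul,
      add_comm 1]
    lia
  · rw [hl.sum_eq_length, (isExcursion_sizeWord _).sum_eq_length, hlen]

theorem bijOn_sizeWord (n : ℕ) : Set.BijOn sizeWord {π : SetPartitionOn n | Noncrossing π}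
    {l | l.length = n ∧ IsExcursion 0 l} := by
  refine ⟨fun π _ => ⟨length_sizeWord π, isExcursion_sizeWord π⟩, injOn_sizeWord n, ?_⟩
  rintro l ⟨rfl, hl⟩
  refine ⟨openerPartition (pathHeight 0 l) l.length, noncrossing_openerPartition ?_,
    sizeWord_openerPartition hl⟩
  simpa [pathHeight_zero] using hl.1

end Surjectivity

section TypeMultiset

variable {n : ℕ} {r : Fin n → ℕ}

/-- The multiset of block sizes of a partition of type `r`; as `i : Fin n` is counted from `0`, the
entry `r i` belongs to the size `i + 1`. -/
def typeMultiset (r : Fin n → ℕ) : Multiset ℕ := ∑ i, Multiset.replicate (r i) (i.1 + 1)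

lemma card_typeMultiset (r : Fin n → ℕ) : (typeMultiset r).card = ∑ i, r i := by
  simp [typeMultiset]

lemma sum_typeMultiset (r : Fin n → ℕ) : (typeMultiset r).sum = ∑ i, (i.1 + 1) * r i := by
  simp [typeMultiset, Multiset.sum_sum, mul_comm]

lemma mem_Icc_of_mem_typeMultiset {k : ℕ} (hk : k ∈ typeMultiset r) : k ∈ Icc 1 n := by
  obtain ⟨i, -, hi⟩ := Multiset.mem_sum.1 hk
  rw [Multiset.eq_of_mem_replicate hi, mem_Icc]
  lia

lemma zero_notMem_typeMultiset (r : Fin n → ℕ) : 0 ∉ typeMultiset r := fun h => by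
  simpa using mem_Icc_of_mem_typeMultiset h

lemma count_typeMultiset (r : Fin n → ℕ) (i : Fin n) : (typeMultiset r).count (i.1 + 1) = r i := by
  simp [typeMultiset, Multiset.count_sum', Multiset.count_replicate, Fin.val_inj]

lemma count_replicate_zero_add_typeMultiset (z k : ℕ) (r : Fin n → ℕ) :
    (Multiset.replicate z 0 + typeMultiset r).count (k + 1) = (typeMultiset r).count (k + 1) := by
  simp [Multiset.count_replicate]

lemma prod_factorial_count_typeMultiset (z : ℕ) (r : Fin n → ℕ) :
    ∏ x ∈ (Multiset.replicate z 0 + typeMultiset r).toFinset,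
      ((Multiset.replicate z 0 + typeMultiset r).count x)! = z ! * ∏ i, (r i)! := by
  have hsub : (Multiset.replicate z 0 + typeMultiset r).toFinset ⊆ range (n + 1) := by
    intro x hx
    rcases Multiset.mem_add.1 (Multiset.mem_toFinset.1 hx) with hx | hx
    · simp [Multiset.eq_of_mem_replicate hx]
    · have := mem_Icc.1 (mem_Icc_of_mem_typeMultiset hx)
      rw [mem_range]
      lia
  rw [prod_factorial_count_of_subset hsub, prod_range_succ', mul_comm, prod_range]
  congr 1
  · simp [Multiset.count_eq_zero_of_notMem (zero_notMem_typeMultiset r)]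
  · simp only [count_replicate_zero_add_typeMultiset, count_typeMultiset]

lemma count_sizeWord (π : SetPartitionOn n) (k : ℕ) :
    (sizeWord π : Multiset ℕ).count (k + 1) = #{B ∈ π.parts | #B = k + 1} := by
  rw [coe_sizeWord, Multiset.count_map, card_filter_parts_card_eq, card_def, filter_val]
  simp only [eq_comm]

lemma hasType_iff_sizeWord {π : SetPartitionOn n} (hr : ∑ i, r i ≤ n) :
    HasType π r ↔
      (sizeWord π : Multiset ℕ) = Multiset.replicate (n - ∑ i, r i) 0 + typeMultiset r := by
  refine ⟨fun h => ?_, fun h i => ?_⟩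
  · refine eq_of_card_eq_of_count_eq 0 ?_ fun k hk => ?_
    · rw [Multiset.coe_card, length_sizeWord, Multiset.card_add, Multiset.card_replicate,
        card_typeMultiset, Nat.sub_add_cancel hr]
    obtain ⟨k, rfl⟩ := Nat.exists_eq_add_one_of_ne_zero hk
    rw [count_replicate_zero_add_typeMultiset, count_sizeWord]
    by_cases hkn : k < n
    · rw [h ⟨k, hkn⟩, count_typeMultiset r ⟨k, hkn⟩]
    · rw [Multiset.count_eq_zero_of_notMem fun hmem => ?_, card_eq_zero, filter_eq_empty_iff]
      · intro B hB hcard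
        have := card_le_card (π.le hB)
        rw [Nat.card_Icc] at this
        lia
      · have := mem_Icc.1 (mem_Icc_of_mem_typeMultiset hmem)
        lia
  · rw [← count_sizeWord, h, count_replicate_zero_add_typeMultiset, count_typeMultiset]

end TypeMultiset

theorem card_noncrossing_mul_eq_excursionCount {n m : ℕ} {r : Fin n → ℕ} (hn : n ≠ 0) (hm : 1 ≤ m)
    (hr : ∑ i, r i ≤ n) :
    Nat.card {π : SetPartitionOn n // Noncrossing π ∧ HasType π r ∧ cutCount π = m - 1} *
      ((n - ∑ i, r i)! * ∏ i, (r i)!) = excursionCount (n - ∑ i, r i) (typeMultiset r) 0 m := by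
  set T : Finset (List ℕ) := {l ∈ arrangements (Multiset.replicate (n - ∑ i, r i) 0 +
    typeMultiset r) | IsExcursion 0 l ∧ numZeros 0 l = m} with hT
  have hmem {l : List ℕ} : l ∈ (T : Set (List ℕ)) ↔
      (l : Multiset ℕ) = Multiset.replicate (n - ∑ i, r i) 0 + typeMultiset r ∧
        IsExcursion 0 l ∧ numZeros 0 l = m := by
    rw [mem_coe, hT, mem_filter, mem_arrangements]
  have hsub : (T : Set (List ℕ)) ⊆ {l | l.length = n ∧ IsExcursion 0 l} := fun l hl => by
    obtain ⟨hletters, hex, -⟩ := hmem.1 hl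
    refine ⟨?_, hex⟩
    rw [← Multiset.coe_card, hletters, Multiset.card_add, Multiset.card_replicate,
      card_typeMultiset, Nat.sub_add_cancel hr]
  have hpreimage : {π : SetPartitionOn n | Noncrossing π ∧ HasType π r ∧ cutCount π = m - 1} =
      {π | Noncrossing π} ∩ sizeWord ⁻¹' T := by
    ext π
    have hcuts : cutCount π = m - 1 ↔ cutCount π + 1 = m := by lia
    rw [Set.mem_inter_iff, Set.mem_preimage, hmem, ← hasType_iff_sizeWord hr, numZeros_sizeWord hn,
      ← hcuts]
    simp [isExcursion_sizeWord]
  rw [excursionCount, labelledCount, prod_factorial_count_typeMultiset, ← hT,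
    ← Set.ncard_coe_finset, ← ((bijOn_sizeWord n).subset_right hsub).ncard_eq, ← hpreimage]
  rfl

/-- The number `N` of noncrossing partitions of `[n]` of type `r` with exactly `m` connected
components satisfies `N · (n - |r| - 1)! · (|r| - m)! · r! = m · (n - m - 1)! · (|r| - 1)!`. -/
theorem card_noncrossing_of_type_components (n m : ℕ) (hn : 1 ≤ n) (hm : 1 ≤ m)
    (r : Fin n → ℕ) (hrv : ∑ i, (i.1 + 1) * r i = n) (hr : ∑ i, r i < n)
    (hmr : m ≤ ∑ i, r i) (hmn : m < n) :
    Nat.card {π : SetPartitionOn n // Noncrossing π ∧ HasType π r ∧ cutCount π = m - 1} *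
        (n - (∑ i, r i) - 1).factorial * ((∑ i, r i) - m).factorial * ∏ i, (r i).factorial =
      m * (n - m - 1).factorial * ((∑ i, r i) - 1).factorial := by
  have hcount := card_noncrossing_mul_eq_excursionCount (r := r) (by lia) hm hr.le
  have hformula := excursionCount_formula (z := n - ∑ i, r i) (M := m) (d := ∑ i, r i - m)
    (zero_notMem_typeMultiset r) le_rfl
    (by rw [sum_typeMultiset, card_typeMultiset, hrv]; lia) (by rw [card_typeMultiset]; lia)
  rw [← hcount, card_typeMultiset, sum_typeMultiset, hrv, mul_left_comm, mul_comm] at hformula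
  have hsolve := hformula.mul_factorial_pred (by lia) (by lia) (Nat.add_sub_cancel' hmr)
    (Nat.sub_add_cancel hr.le)
  rw [← hsolve]
  ring
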